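/- arXiv:2208.09265 — 2 statements merged into one kernel-verified Lean document; each statement's English description precedes it below -/
import Mathlib

section
/- For every positive integer b, F(b,1) ≤ 1.4; that is, \(b^2 \binom{3b-2}{b-1} (1/2)^{3b-1} \le 1.4\). -/
/-- `F b j = b² · C((j+2)b − 2, b − 1) · (1/2)^((j+2)b − 1)`, the bound on the
expected number of holes in region `j` for local-buffer size `b`. -/
noncomputable def F (b j : ℕ) : ℝ :=
  (b : ℝ) ^ 2 * (Nat.choose ((j + 2) * b - 2) (b - 1) : ℝ) * (1 / 2) ^ ((j + 2) * b - 1)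

/-! The ratio `F (b + 1) 1 / F b 1` is the rational function
`3 (b + 1)² (9 b² - 1) / (16 b³ (2 b + 1))`, which is at least `1` for `1 ≤ b ≤ 8` and at most `1`
for `b ≥ 9`. Hence `b ↦ F b 1` peaks at `b = 9`, where its value is about `1.3055`. -/

open scoped Nat in
theorem add_choose_add_mul_ascFactorial (m k c a : ℕ) :
    (m + c + (k + a)).choose (k + a) * ((m + 1).ascFactorial c * (k + 1).ascFactorial a) =
      (m + k).choose k * (m + k + 1).ascFactorial (c + a) := by
  apply Nat.eq_of_mul_eq_mul_right (mul_pos m.factorial_pos k.factorial_pos)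
  calc _ = (m + c + (k + a)).choose (k + a) * (m ! * (m + 1).ascFactorial c) *
          (k ! * (k + 1).ascFactorial a) := by ring
    _ = (m + k + (c + a))! := by
      rw [Nat.factorial_mul_ascFactorial, Nat.factorial_mul_ascFactorial,
        Nat.add_choose_mul_factorial_mul_factorial, add_add_add_comm]
    _ = (m + k).choose k * m ! * k ! * (m + k + 1).ascFactorial (c + a) := by
      rw [Nat.add_choose_mul_factorial_mul_factorial, Nat.factorial_mul_ascFactorial]
    _ = _ := by ring

theorem choose_three_mul_add_four (n : ℕ) :
    ((3 * n + 4).choose (n + 1) : ℝ) =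
      (3 * n + 1).choose n * (3 * (3 * n + 2) * (3 * n + 4) / (2 * (n + 1) * (2 * n + 3))) := by
  have h := add_choose_add_mul_ascFactorial (2 * n + 1) n 2 1
  rw [show 2 * n + 1 + 2 + (n + 1) = 3 * n + 4 by ring,
    show 2 * n + 1 + n = 3 * n + 1 by ring] at h
  simp only [Nat.ascFactorial_succ, Nat.ascFactorial_zero] at h
  have h_real := congrArg (Nat.cast (R := ℝ)) h
  push_cast at h_real
  rw [mul_div_assoc', eq_div_iff (by positivity)]
  apply mul_right_cancel₀ (show (n + 1 : ℝ) ≠ 0 by positivity)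
  linear_combination h_real

theorem F_nonneg (b j : ℕ) : 0 ≤ F b j := by
  unfold F
  positivity

theorem F_succ_left (n j : ℕ) :
    F (n + 1) j =
      (n + 1) ^ 2 * ((j + 2) * n + j).choose n * (1 / 2) ^ ((j + 2) * n + j + 1) := by
  have h_top : (j + 2) * (n + 1) - 2 = (j + 2) * n + j := by grind
  have h_exp : (j + 2) * (n + 1) - 1 = (j + 2) * n + j + 1 := by grind
  rw [F, h_top, h_exp, Nat.add_sub_cancel, Nat.cast_add_one]

theorem F_succ_one_eq_mul {b : ℕ} (hb : 0 < b) :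
    F (b + 1) 1 = F b 1 * (3 * (b + 1) ^ 2 * (9 * b ^ 2 - 1) / (16 * b ^ 3 * (2 * b + 1))) := by
  obtain ⟨n, rfl⟩ := Nat.exists_eq_succ_of_ne_zero hb.ne'
  rw [Nat.succ_eq_add_one, F_succ_left (n + 1), F_succ_left n,
    show (1 + 2) * (n + 1) + 1 = 3 * n + 4 by ring, show (1 + 2) * n + 1 = 3 * n + 1 by ring,
    choose_three_mul_add_four, show 3 * n + 4 + 1 = 3 * n + 1 + 1 + 3 by ring,
    pow_add _ (3 * n + 1 + 1)]
  push_cast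
  field_simp
  ring

theorem monotoneOn_F_one : MonotoneOn (F · 1) (Set.Icc 1 9) := by
  refine monotoneOn_of_le_add_one Set.ordConnected_Icc fun b _ hb hb_succ ↦ ?_
  have hb_pos : 0 < b := hb.1
  have hb_le : b ≤ 8 := Nat.le_of_succ_le_succ hb_succ.2
  rw [F_succ_one_eq_mul hb_pos]
  refine le_mul_of_one_le_right (F_nonneg b 1) ?_
  rw [one_le_div (by positivity)]
  interval_cases b <;> norm_num

theorem antitoneOn_F_one : AntitoneOn (F · 1) (Set.Ici 9) := by
  refine antitoneOn_of_add_one_le Set.ordConnected_Ici fun b _ hb _ ↦ ?_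
  have hb_real : (9 : ℝ) ≤ b := by exact_mod_cast hb
  rw [F_succ_one_eq_mul (Nat.zero_lt_of_lt hb)]
  refine mul_le_of_le_one_right (F_nonneg b 1) ?_
  rw [div_le_one (by positivity)]
  suffices 0 ≤ (b : ℝ) ^ 3 * (5 * b - 45) + b ^ 2 * (7 * b - 63) + 39 * b ^ 2 + 6 * b + 3 by
    linarith
  have : 0 ≤ 5 * (b : ℝ) - 45 := by linarith
  have : 0 ≤ 7 * (b : ℝ) - 63 := by linarith
  positivity

theorem F_one_le_F_nine_one {b : ℕ} (hb : 0 < b) : F b 1 ≤ F 9 1 := by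
  rcases le_total b 9 with h | h
  · exact monotoneOn_F_one ⟨hb, h⟩ (by simp) h
  · exact antitoneOn_F_one Set.self_mem_Ici h h

theorem F_nine_one_eq : F 9 1 = 87607575 / 67108864 := by
  norm_num [F, Nat.choose_eq_descFactorial_div_factorial, Nat.descFactorial, Nat.factorial]

theorem F_one_le : ∀ b : ℕ, 0 < b → F b 1 ≤ 1.4 := by
  intro b hb
  calc F b 1 ≤ F 9 1 := F_one_le_F_nine_one hb
    _ ≤ 1.4 := by norm_num [F_nine_one_eq]
end

section
/- For every positive integer b and every positive integer j, \(\sum_{i=0}^{b-1} (1/2)^{jb+2i+1} \binom{jb+2i}{i} \le b \cdot (1/2)^{(j+2)b-1} \binom{(j+2)b-2}{b-1}\). -/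
/-!
Write `m = j * b`. The ratio of consecutive summands is
`(m + 2i + 1)(m + 2i + 2) / (4 (i + 1)(m + i + 1))`, and the numerator exceeds the denominator by
exactly `m ^ 2 - (m + 2 (i + 1))`. Since `b ≤ m`, this is nonnegative for all `i + 1 < b`, so the
summands increase up to the last one, which therefore bounds each of the `b` summands.
-/

theorem add_two_mul_le_sq_of_lt {m n : ℕ} (h : n < m) : m + 2 * n ≤ m ^ 2 := by
  obtain ⟨d, rfl⟩ := Nat.exists_eq_add_of_lt h
  have : n ≤ n ^ 2 := Nat.le_self_pow two_ne_zero n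
  nlinarith

theorem choose_add_two_mul_eq (k l : ℕ) :
    (k + l + 2).choose (k + 1) * ((k + 1) * (l + 1)) =
      (k + l).choose k * ((k + l + 1) * (k + l + 2)) := by
  have raise_top : (k + l).choose k * (k + l + 1) = (k + l + 1).choose k * (l + 1) := by
    simpa only [show k + l + 1 - k = l + 1 by lia] using Nat.choose_mul_succ_eq (k + l) k
  have raise_both : (k + l + 2) * (k + l + 1).choose k = (k + l + 2).choose (k + 1) * (k + 1) :=
    Nat.add_one_mul_choose_eq (k + l + 1) k
  calc (k + l + 2).choose (k + 1) * ((k + 1) * (l + 1))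
      = (k + l + 2) * ((k + l + 1).choose k * (l + 1)) := by
        rw [← mul_assoc, ← raise_both, mul_assoc]
    _ = (k + l).choose k * ((k + l + 1) * (k + l + 2)) := by rw [← raise_top]; ring

theorem four_mul_choose_le_choose_iff (m i : ℕ) :
    4 * (m + 2 * i).choose i ≤ (m + 2 * (i + 1)).choose (i + 1) ↔ m + 2 * (i + 1) ≤ m ^ 2 := by
  have ratio : (m + 2 * (i + 1)).choose (i + 1) * ((i + 1) * (m + i + 1)) =
      (m + 2 * i).choose i * ((m + 2 * i + 1) * (m + 2 * i + 2)) := by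
    convert choose_add_two_mul_eq i (m + i) using 3 <;> ring
  have choose_pos : 0 < (m + 2 * i).choose i := Nat.choose_pos (by lia)
  have gap : (m + 2 * i + 1) * (m + 2 * i + 2) + (m + 2 * (i + 1)) =
      4 * ((i + 1) * (m + i + 1)) + m ^ 2 := by ring
  calc 4 * (m + 2 * i).choose i ≤ (m + 2 * (i + 1)).choose (i + 1)
      ↔ (m + 2 * i).choose i * (4 * ((i + 1) * (m + i + 1))) ≤
          (m + 2 * i).choose i * ((m + 2 * i + 1) * (m + 2 * i + 2)) := by
        rw [← ratio, mul_left_comm, ← mul_assoc, mul_le_mul_iff_left₀ (by positivity)]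
    _ ↔ 4 * ((i + 1) * (m + i + 1)) ≤ (m + 2 * i + 1) * (m + 2 * i + 2) :=
        mul_le_mul_iff_right₀ choose_pos
    _ ↔ m + 2 * (i + 1) ≤ m ^ 2 := by constructor <;> intro h <;> linarith only [gap, h]

/-- The probability that `m + 2 * i + 1` fair coin tosses show exactly `i` heads among the first
`m + 2 * i` and a head at the end. The summand `f_{b,j}(i)` is the case `m = j * b`. -/
noncomputable def fairCoinWeight (m i : ℕ) : ℝ :=
  (1 / 2) ^ (m + 2 * i + 1) * (m + 2 * i).choose i

theorem fairCoinWeight_le_succ_iff (m i : ℕ) :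
    fairCoinWeight m i ≤ fairCoinWeight m (i + 1) ↔ m + 2 * (i + 1) ≤ m ^ 2 := by
  have common_power : fairCoinWeight m i =
      (1 / 2) ^ (m + 2 * (i + 1) + 1) * (4 * (m + 2 * i).choose i) := by
    unfold fairCoinWeight
    ring
  rw [common_power, fairCoinWeight, mul_le_mul_iff_right₀ (by positivity),
    ← four_mul_choose_le_choose_iff]
  norm_cast

theorem monotoneOn_fairCoinWeight {m n : ℕ} (h : m + 2 * n ≤ m ^ 2) :
    MonotoneOn (fairCoinWeight m) (Set.Iic n) :=
  monotoneOn_of_le_add_one Set.ordConnected_Iic fun i _ _ (hi : i + 1 ≤ n) ↦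
    (fairCoinWeight_le_succ_iff m i).mpr (by lia)

theorem sum_f_le_general {m n : ℕ} (h : m + 2 * n ≤ m ^ 2) :
    ∑ i ∈ Finset.range (n + 1), fairCoinWeight m i ≤ (n + 1 : ℕ) * fairCoinWeight m n := by
  have le_last : ∀ i ∈ Finset.range (n + 1), fairCoinWeight m i ≤ fairCoinWeight m n := by
    intro i hi
    have hin : i ≤ n := Finset.mem_range_succ_iff.mp hi
    exact monotoneOn_fairCoinWeight h hin Set.self_mem_Iic hin
  simpa only [Finset.card_range, nsmul_eq_mul] using Finset.sum_le_card_nsmul _ _ _ le_last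

theorem sum_f_le :
    ∀ b j : ℕ, 0 < b → 0 < j →
      ∑ i ∈ Finset.range b,
          (1 / 2 : ℝ) ^ (j * b + 2 * i + 1) * (Nat.choose (j * b + 2 * i) i : ℝ) ≤
        (b : ℝ) * (1 / 2) ^ ((j + 2) * b - 1) *
          (Nat.choose ((j + 2) * b - 2) (b - 1) : ℝ) := by
  intro b j hb hj
  obtain ⟨n, rfl⟩ := Nat.exists_eq_add_one.mpr hb
  have last_index : (j + 2) * (n + 1) = j * (n + 1) + 2 * n + 2 := by ring
  have n_lt : n < j * (n + 1) := Nat.le_mul_of_pos_left (n + 1) hj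
  simpa only [last_index, fairCoinWeight, mul_assoc, Nat.add_sub_cancel, Nat.reduceSubDiff] using
    sum_f_le_general (add_two_mul_le_sq_of_lt n_lt)
end
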